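/- (Peetre-type two-weight inequality) Let φ be a function of the class 𝓜, let s ∈ ℝ, ε > 0 and n ≥ 1. Then there exists a constant C > 0 such that for all ξ, η ∈ ℝⁿ one has ⟨ξ⟩^{s} φ(⟨ξ⟩) ≤ C ⟨ξ − η⟩^{|s|+ε} ⟨η⟩^{s} φ(⟨η⟩). -/

import Mathlib

open MeasureTheory Filter Topology

/-- The class `𝓜` of Borel measurable functions `φ : [1,∞) → (0,∞)` such that `φ` and `1/φ`
are bounded on every interval `[1,b]`, `1 < b < ∞`, and `φ` is slowly varying at `+∞`
in Karamata's sense. (We model `φ` as a function on all of `ℝ`; only its values on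
`[1,∞)` matter.) -/
def SlowlyVaryingM (φ : ℝ → ℝ) : Prop :=
  Measurable φ ∧
  (∀ t : ℝ, 1 ≤ t → 0 < φ t) ∧
  (∀ b : ℝ, 1 < b → ∃ C : ℝ, 0 < C ∧ ∀ t ∈ Set.Icc (1:ℝ) b, φ t ≤ C ∧ 1 / φ t ≤ C) ∧
  (∀ lam : ℝ, 0 < lam → Tendsto (fun t : ℝ => φ (lam * t) / φ t) atTop (𝓝 1))


/-- The "Japanese bracket" `⟨ξ⟩ := (1 + |ξ|²)^{1/2}` of a point `ξ ∈ ℝⁿ`. -/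
noncomputable def jbracket {n : ℕ} (ξ : EuclideanSpace ℝ (Fin n)) : ℝ :=
  Real.sqrt (1 + ‖ξ‖ ^ 2)

lemma aux_local (h : ℝ → ℝ) (hm : Measurable h)
    (hl : ∀ a : ℝ, Tendsto (fun x => h (x + a) - h x) atTop (𝓝 0)) :
    ∃ X : ℝ, ∀ x, X ≤ x → ∀ u ∈ Set.Icc (0:ℝ) 1, |h (x + u) - h x| ≤ 2 := by
  set E : ℝ → Set ℝ := fun x => Set.Icc (0:ℝ) 2 ∩ {a | 1 < |h (x + a) - h x|} with hE
  have hEm : ∀ x, MeasurableSet (E x) := by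
    intro x
    refine measurableSet_Icc.inter (measurableSet_lt measurable_const ?_)
    have : Measurable (fun a => h (x + a) - h x) :=
      (hm.comp (measurable_const_add x)).sub measurable_const
    simpa only [Real.norm_eq_abs] using this.norm
  have ht : Tendsto (fun x => volume (E x)) atTop (𝓝 (volume (∅ : Set ℝ))) := by
    refine tendsto_measure_of_tendsto_indicator atTop hEm (B := Set.Icc (0:ℝ) 2)
      measurableSet_Icc (by simp) (Eventually.of_forall fun x => Set.inter_subset_left) ?_
    intro a
    have := (hl a).abs
    rw [abs_zero] at this
    filter_upwards [this.eventually (gt_mem_nhds (zero_lt_one))] with x hx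
    simp only [Set.mem_empty_iff_false, iff_false]
    intro hxa
    exact absurd hxa.2 (not_lt.mpr hx.le)
  rw [measure_empty] at ht
  have h2 : (0 : ENNReal) < ENNReal.ofReal (1/2) := by simp
  obtain ⟨X, hX⟩ := eventually_atTop.1 (ht.eventually (gt_mem_nhds h2))
  refine ⟨X, fun x hx u hu => ?_⟩
  by_contra hcon
  push Not at hcon
  have hsub : Set.Icc (1:ℝ) 2 ⊆ E x ∪ (fun a => a + (-u)) ⁻¹' (E (x + u)) := by
    intro a ha
    by_contra hn
    simp only [Set.mem_union, Set.mem_preimage, not_or] at hn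
    have h1 : |h (x + a) - h x| ≤ 1 := by
      by_contra h'
      exact hn.1 ⟨⟨by linarith [ha.1], ha.2⟩, not_le.1 h'⟩
    have h3 : |h (x + u + (a + -u)) - h (x + u)| ≤ 1 := by
      by_contra h'
      exact hn.2 ⟨⟨by linarith [ha.1, hu.2], by linarith [ha.2, hu.1]⟩, not_le.1 h'⟩
    rw [show x + u + (a + -u) = x + a by ring] at h3
    rw [abs_le] at h1 h3
    have : |h (x + u) - h x| ≤ 2 := abs_le.2 ⟨by linarith, by linarith⟩
    linarith
  have hv := (measure_mono hsub).trans (measure_union_le (μ := volume) _ _)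
  rw [measure_preimage_add_right, Real.volume_Icc] at hv
  have hlt := ENNReal.add_lt_add (hX x hx) (hX (x + u) (by linarith [hu.1]))
  rw [← ENNReal.ofReal_add (by norm_num) (by norm_num)] at hlt
  norm_num at hlt hv
  exact absurd hlt (not_lt.2 hv)

lemma aux_potter (h : ℝ → ℝ) (hm : Measurable h)
    (hl : ∀ a : ℝ, Tendsto (fun x => h (x + a) - h x) atTop (𝓝 0))
    (hb : ∀ X : ℝ, 0 < X → ∃ M, ∀ x ∈ Set.Icc (0:ℝ) X, |h x| ≤ M) (ε : ℝ) (hε : 0 < ε) :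
    ∃ K : ℝ, ∀ x y, 0 ≤ x → x ≤ y → |h y - h x| ≤ K + ε * (y - x) := by
  obtain ⟨X₁, hX₁⟩ := aux_local h hm hl
  have := (hl 1).abs
  rw [abs_zero] at this
  obtain ⟨X₂, hX₂⟩ := eventually_atTop.1 (this.eventually (gt_mem_nhds hε))
  obtain ⟨X, h0, h1, h2⟩ : ∃ X : ℝ, 0 < X ∧ X₁ ≤ X ∧ X₂ ≤ X :=
    ⟨max 1 (max X₁ X₂), by positivity, by simp, by simp⟩
  have hstep : ∀ x, X ≤ x → ∀ m : ℕ, |h (x + m) - h x| ≤ ε * m := by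
    intro x hx m
    induction m with
    | zero => simp
    | succ k ih =>
      have hk := hX₂ (x + k) (by have : (0:ℝ) ≤ k := k.cast_nonneg
                                 linarith)
      have := abs_sub_le (h (x + k + 1)) (h (x + k)) (h x)
      push_cast
      rw [← add_assoc]
      linarith
  have hbig : ∀ x y, X ≤ x → x ≤ y → |h y - h x| ≤ 2 + ε * (y - x) := by
    intro x y hx hxy
    have hf := Nat.floor_le (sub_nonneg.2 hxy)
    have hf' := Nat.lt_floor_add_one (y - x)
    set m := ⌊y - x⌋₊
    have hm0 : (0:ℝ) ≤ m := m.cast_nonneg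
    have a1 := hstep x hx m
    have a2 := hX₁ (x + m) (by linarith) (y - x - m) ⟨by linarith, by linarith⟩
    rw [show x + m + (y - x - m) = y by ring] at a2
    have := abs_sub_le (h y) (h (x + m)) (h x)
    have := mul_le_mul_of_nonneg_left hf hε.le
    linarith
  obtain ⟨M, hM⟩ := hb X h0
  have hMX := hM X ⟨h0.le, le_rfl⟩
  have hM0 : 0 ≤ M := (abs_nonneg _).trans hMX
  refine ⟨2 + 2 * M, fun x y hx hxy => ?_⟩
  have e0 : 0 ≤ ε * (y - x) := mul_nonneg hε.le (by linarith)
  rcases le_total X x with hc | hc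
  · linarith [hbig x y hc hxy]
  have b1 := hM x ⟨hx, hc⟩
  rcases le_total X y with hd | hd
  · have b2 := hbig X y le_rfl hd
    have := mul_le_mul_of_nonneg_left hc hε.le
    rw [abs_le] at *
    constructor <;> linarith
  · have b2 := hM y ⟨hx.trans hxy, hd⟩
    rw [abs_le] at *
    constructor <;> linarith

lemma aux_one_le {n : ℕ} (ξ : EuclideanSpace ℝ (Fin n)) : 1 ≤ jbracket ξ := by
  unfold jbracket
  rw [Real.one_le_sqrt]
  nlinarith [sq_nonneg ‖ξ‖]

lemma aux_peetre {n : ℕ} (ξ η : EuclideanSpace ℝ (Fin n)) :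
    jbracket ξ ≤ 2 * jbracket (ξ - η) * jbracket η := by
  have h1 := aux_one_le (ξ - η)
  have h2 := aux_one_le η
  have e1 : jbracket (ξ - η) ^ 2 = 1 + ‖ξ - η‖ ^ 2 := Real.sq_sqrt (by positivity)
  have e2 : jbracket η ^ 2 = 1 + ‖η‖ ^ 2 := Real.sq_sqrt (by positivity)
  have ht : ‖ξ‖ ≤ ‖ξ - η‖ + ‖η‖ := by simpa using norm_add_le (ξ - η) η
  have h0 := norm_nonneg ξ
  apply Real.sqrt_le_iff.2
  refine ⟨by positivity, ?_⟩
  rw [mul_pow, mul_pow, e1, e2]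
  have : ‖ξ‖ ^ 2 ≤ (‖ξ - η‖ + ‖η‖) ^ 2 := by gcongr
  nlinarith [sq_nonneg (‖ξ - η‖ - ‖η‖), mul_nonneg (sq_nonneg ‖ξ - η‖) (sq_nonneg ‖η‖),
    sq_nonneg ‖ξ - η‖, sq_nonneg ‖η‖]

/-- Peetre-type two-weight inequality for the refined weights
`⟨ξ⟩^s φ(⟨ξ⟩)`. -/
theorem peetre_type_two_weight_inequality
    (φ : ℝ → ℝ) (hφ : SlowlyVaryingM φ) (s ε : ℝ) (hε : 0 < ε)
    (n : ℕ) (hn : 1 ≤ n) :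
    ∃ C : ℝ, 0 < C ∧ ∀ ξ η : EuclideanSpace ℝ (Fin n),
      jbracket ξ ^ s * φ (jbracket ξ)
        ≤ C * jbracket (ξ - η) ^ (|s| + ε) * jbracket η ^ s * φ (jbracket η) := by
  obtain ⟨hmeas, hpos, hbd, hsv⟩ := hφ
  set h : ℝ → ℝ := fun x => Real.log (φ (Real.exp x)) with hh
  have hm : Measurable h := Real.measurable_log.comp (hmeas.comp Real.measurable_exp)
  have hl : ∀ a : ℝ, Tendsto (fun x => h (x + a) - h x) atTop (𝓝 0) := by
    intro a
    have h1 := ((hsv (Real.exp a) (Real.exp_pos a)).comp Real.tendsto_exp_atTop).log one_ne_zero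
    rw [Real.log_one] at h1
    refine h1.congr' ?_
    filter_upwards [eventually_ge_atTop 0, eventually_ge_atTop (-a)] with x hx hxa
    have p1 := hpos (Real.exp x) (Real.one_le_exp hx)
    have p2 := hpos (Real.exp (x + a)) (Real.one_le_exp (by linarith))
    simp only [Function.comp, hh]
    rw [← Real.log_div p2.ne' p1.ne', Real.exp_add, mul_comm]
  have hb : ∀ X : ℝ, 0 < X → ∃ M, ∀ x ∈ Set.Icc (0:ℝ) X, |h x| ≤ M := by
    intro X hX
    obtain ⟨C, hC, hCb⟩ := hbd (Real.exp X) (Real.one_lt_exp_iff.2 hX)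
    refine ⟨Real.log C, fun x hx => ?_⟩
    have p1 := hpos (Real.exp x) (Real.one_le_exp hx.1)
    obtain ⟨c1, c2⟩ := hCb (Real.exp x) ⟨Real.one_le_exp hx.1, Real.exp_le_exp.2 hx.2⟩
    have d1 := Real.log_le_log p1 c1
    have d2 := Real.log_le_log (by positivity) c2
    rw [one_div, Real.log_inv] at d2
    exact abs_le.2 ⟨by linarith, d1⟩
  obtain ⟨K, hK⟩ := aux_potter h hm hl hb ε hε
  have hK' : ∀ x y, 0 ≤ x → 0 ≤ y → |h y - h x| ≤ K + ε * |y - x| := by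
    intro x y hx hy
    rcases le_total x y with hc | hc
    · rw [abs_of_nonneg (sub_nonneg.2 hc)]; exact hK x y hx hc
    · rw [abs_sub_comm, abs_sub_comm y x, abs_of_nonneg (sub_nonneg.2 hc)]
      exact hK y x hy hc
  refine ⟨Real.exp (K + (|s| + ε) * Real.log 2), Real.exp_pos _, fun ξ η => ?_⟩
  have q1 := aux_one_le ξ
  have q2 := aux_one_le η
  have q3 := aux_one_le (ξ - η)
  have r1 := aux_peetre ξ η
  have r2 := aux_peetre η ξ
  have hsymm : jbracket (η - ξ) = jbracket (ξ - η) := by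
    unfold jbracket; rw [norm_sub_rev]
  rw [hsymm] at r2
  generalize jbracket ξ = a at *
  generalize jbracket η = b at *
  generalize jbracket (ξ - η) = c at *
  have pa : 0 < a := by linarith
  have pb : 0 < b := by linarith
  have pc : 0 < c := by linarith
  have l1 := Real.log_le_log pa r1
  have l2 := Real.log_le_log pb r2
  rw [Real.log_mul (by positivity) (by positivity),
    Real.log_mul (by positivity) (by positivity)] at l1 l2
  have lab : |Real.log a - Real.log b| ≤ Real.log 2 + Real.log c :=
    abs_le.2 ⟨by linarith, by linarith⟩
  have k := hK' (Real.log b) (Real.log a) (Real.log_nonneg q2) (Real.log_nonneg q1)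
  simp only [hh, Real.exp_log pa, Real.exp_log pb] at k
  have k1 := (abs_le.1 k).2
  have k2 := mul_le_mul_of_nonneg_left lab hε.le
  have k3 := mul_le_mul_of_nonneg_left lab (abs_nonneg s)
  have k4 : s * (Real.log a - Real.log b) ≤ |s| * |Real.log a - Real.log b| := by
    rw [← abs_mul]; exact le_abs_self _
  have pφa := hpos a q1
  have pφb := hpos b q2
  rw [Real.rpow_def_of_pos pa, Real.rpow_def_of_pos pb, Real.rpow_def_of_pos pc]
  rw [← Real.exp_log pφa, ← Real.exp_log pφb, ← Real.exp_add, ← Real.exp_add, ← Real.exp_add,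
    ← Real.exp_add, Real.exp_le_exp]
  nlinarith
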